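/- Let α be real with 0 < α < 2 and let M ≥ 1 be a natural number. Then the M × M Toeplitz matrix P with entries P_{ij} = w_{i−j}^α (1 ≤ i, j ≤ M) is symmetric and positive definite, where w_k^α = (−1)^k Γ(α+1) / (Γ(α/2 − k + 1) Γ(α/2 + k + 1)). -/

import Mathlib

open Real Matrix

/-- The fractional centered-difference weights
`w_k^α = (−1)^k Γ(α+1) / (Γ(α/2 − k + 1) Γ(α/2 + k + 1))`. -/
noncomputable def fracWeight (α : ℝ) (k : ℤ) : ℝ :=
  (-1 : ℝ) ^ k * Real.Gamma (α + 1) /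
    (Real.Gamma (α / 2 - k + 1) * Real.Gamma (α / 2 + k + 1))

/-!
Since `s ↦ (Γ s)⁻¹` satisfies `(Γ s)⁻¹ = s (Γ (s + 1))⁻¹` for every real `s`
(at `s = 0` because `Γ 0 = 0` by convention), the weights obey
`(α / 2 + k + 1) w_{k+1} = -(α / 2 - k) w_k`. This recurrence forces `w_k < 0` for `k ≠ 0` when
`0 < α < 2`, and it makes the symmetric partial sums telescope to the closed form
`(α / 2) ∑_{|k| ≤ n} w_k = (α / 2 - n) w_n`, which is positive. Hence any finite family of
off-diagonal weights has total absolute value less than `w_0`: the symmetric matrix is strictly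
diagonally dominant, and Gershgorin's theorem makes its eigenvalues positive.
-/

open scoped ComplexOrder in
theorem posDef_of_isHermitian_of_sum_row_lt_diag {𝕜 n : Type*} [RCLike 𝕜] [Fintype n]
    [DecidableEq n] {A : Matrix n n 𝕜} (hA : A.IsHermitian)
    (hdom : ∀ i, ∑ j ∈ Finset.univ.erase i, ‖A i j‖ < RCLike.re (A i i)) : A.PosDef := by
  refine hA.posDef_iff_eigenvalues_pos.mpr fun m ↦ ?_
  have hspec : (hA.eigenvalues m : 𝕜) ∈ spectrum 𝕜 (toLin' A) := by
    rw [spectrum_toLin', hA.spectrum_eq_image_range]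
    exact ⟨_, ⟨m, rfl⟩, rfl⟩
  obtain ⟨i, hball⟩ := eigenvalue_mem_ball (Module.End.hasEigenvalue_iff_mem_spectrum.mpr hspec)
  have hre : RCLike.re (A i i) - hA.eigenvalues m ≤ ‖A i i - (hA.eigenvalues m : 𝕜)‖ := by
    simpa using RCLike.re_le_norm (A i i - (hA.eigenvalues m : 𝕜))
  rw [mem_closedBall_iff_norm'] at hball
  change 0 < hA.eigenvalues m
  linarith [hdom i]

theorem inv_Gamma_eq_mul_inv_Gamma_add_one (s : ℝ) :
    (Real.Gamma s)⁻¹ = s * (Real.Gamma (s + 1))⁻¹ := by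
  rcases eq_or_ne s 0 with rfl | hs
  · simp
  · rw [Real.Gamma_add_one hs, mul_inv, mul_inv_cancel_left₀ hs]

theorem fracWeight_neg (α : ℝ) (k : ℤ) : fracWeight α (-k) = fracWeight α k := by
  simp only [fracWeight, Int.cast_neg, sub_neg_eq_add, ← sub_eq_add_neg, _root_.zpow_neg,
    ← _root_.inv_zpow, inv_neg_one, mul_comm (Real.Gamma (α / 2 + k + 1))]

theorem mul_fracWeight_add_one (α : ℝ) (k : ℤ) :
    (α / 2 + k + 1) * fracWeight α (k + 1) = -((α / 2 - k) * fracWeight α k) := by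
  have hminus := inv_Gamma_eq_mul_inv_Gamma_add_one (α / 2 - k)
  have hplus := inv_Gamma_eq_mul_inv_Gamma_add_one (α / 2 + k + 1)
  have hsign : (-1 : ℝ) ^ (k + 1) = -(-1) ^ k := by
    rw [zpow_add_one₀ (by norm_num), mul_neg_one]
  calc (α / 2 + k + 1) * fracWeight α (k + 1)
      = -(-1) ^ k * Real.Gamma (α + 1) * (Real.Gamma (α / 2 - k))⁻¹
          * ((α / 2 + k + 1) * (Real.Gamma (α / 2 + k + 1 + 1))⁻¹) := by
        rw [fracWeight, hsign, Int.cast_add, Int.cast_one, ← add_assoc (α / 2),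
          show α / 2 - (k + 1) + 1 = α / 2 - k by ring]
        ring
    _ = -((α / 2 - k) * fracWeight α k) := by
        rw [← hplus, hminus, fracWeight]
        ring

theorem fracWeight_zero_pos {α : ℝ} (hα : -1 < α) : 0 < fracWeight α 0 := by
  have hnum : 0 < Real.Gamma (α + 1) := Real.Gamma_pos_of_pos (by linarith)
  have hden : 0 < Real.Gamma (α / 2 + 1) := Real.Gamma_pos_of_pos (by linarith)
  simp only [fracWeight, zpow_zero, Int.cast_zero, sub_zero, add_zero]
  positivity

theorem fracWeight_lt_zero_of_one_le {α : ℝ} (hα0 : 0 < α) (hα2 : α < 2) {k : ℤ} (hk : 1 ≤ k) :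
    fracWeight α k < 0 := by
  induction k, hk using Int.leInduction with
  | base =>
    have hrec := mul_fracWeight_add_one α 0
    have hzero : 0 < α / 2 * fracWeight α 0 :=
      mul_pos (by linarith) (fracWeight_zero_pos (by linarith))
    simp only [Int.cast_zero, sub_zero, add_zero, zero_add] at hrec
    exact neg_of_mul_neg_right (by linarith) (by linarith : 0 ≤ α / 2 + 1)
  | succ k hk ih =>
    have hrec := mul_fracWeight_add_one α k
    have hk' : (1 : ℝ) ≤ k := by exact_mod_cast hk
    have hpos : 0 < (α / 2 - k) * fracWeight α k := mul_pos_of_neg_of_neg (by linarith) ih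
    exact neg_of_mul_neg_right (by linarith) (by linarith : 0 ≤ α / 2 + k + 1)

theorem fracWeight_lt_zero {α : ℝ} (hα0 : 0 < α) (hα2 : α < 2) {k : ℤ} (hk : k ≠ 0) :
    fracWeight α k < 0 := by
  rcases lt_or_gt_of_ne hk with hneg | hpos
  · rw [← fracWeight_neg]
    exact fracWeight_lt_zero_of_one_le hα0 hα2 (by omega)
  · exact fracWeight_lt_zero_of_one_le hα0 hα2 hpos

theorem half_mul_sum_Icc_fracWeight (α : ℝ) (n : ℕ) :
    α / 2 * ∑ k ∈ Finset.Icc (-n : ℤ) n, fracWeight α k = (α / 2 - n) * fracWeight α n := by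
  induction n with
  | zero => simp
  | succ n ih =>
    have hrec := mul_fracWeight_add_one α n
    push_cast at hrec ⊢
    rw [Finset.sum_Icc_succ_eq_add_endpoints, fracWeight_neg, mul_add, ih]
    linarith

theorem sum_Icc_fracWeight_pos {α : ℝ} (hα0 : 0 < α) (hα2 : α < 2) (n : ℕ) :
    0 < ∑ k ∈ Finset.Icc (-n : ℤ) n, fracWeight α k := by
  rcases Nat.eq_zero_or_pos n with rfl | hn
  · simpa using fracWeight_zero_pos (by linarith)
  · have hn' : (1 : ℝ) ≤ n := by exact_mod_cast hn
    refine pos_of_mul_pos_right (a := α / 2) ?_ (by linarith)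
    rw [half_mul_sum_Icc_fracWeight]
    exact mul_pos_of_neg_of_neg (by linarith) (fracWeight_lt_zero hα0 hα2 (by omega))

theorem sum_abs_fracWeight_lt {α : ℝ} (hα0 : 0 < α) (hα2 : α < 2) {s : Finset ℤ} (hs : 0 ∉ s) :
    ∑ k ∈ s, |fracWeight α k| < fracWeight α 0 := by
  set n := s.sup Int.natAbs
  have hzero : (0 : ℤ) ∈ Finset.Icc (-n : ℤ) n := Finset.mem_Icc.mpr (by omega)
  have hsub : s ⊆ (Finset.Icc (-n : ℤ) n).erase 0 := fun k hk ↦ by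
    have hkn : k.natAbs ≤ n := Finset.le_sup (f := Int.natAbs) hk
    exact Finset.mem_erase.mpr ⟨ne_of_mem_of_not_mem hk hs, Finset.mem_Icc.mpr (by omega)⟩
  calc ∑ k ∈ s, |fracWeight α k|
      ≤ ∑ k ∈ (Finset.Icc (-n : ℤ) n).erase 0, |fracWeight α k| :=
        Finset.sum_le_sum_of_subset_of_nonneg hsub fun _ _ _ ↦ abs_nonneg _
    _ = -∑ k ∈ (Finset.Icc (-n : ℤ) n).erase 0, fracWeight α k := by
        rw [← Finset.sum_neg_distrib]
        exact Finset.sum_congr rfl fun k hk ↦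
          abs_of_neg (fracWeight_lt_zero hα0 hα2 (Finset.ne_of_mem_erase hk))
    _ = fracWeight α 0 - ∑ k ∈ Finset.Icc (-n : ℤ) n, fracWeight α k := by
        rw [← Finset.add_sum_erase _ (fracWeight α) hzero, sub_add_cancel_left]
    _ < fracWeight α 0 := sub_lt_self _ (sum_Icc_fracWeight_pos hα0 hα2 n)

theorem toeplitz_fracWeight_isSymm {ι : Type*} (α : ℝ) (f : ι → ℤ) :
    (of fun i j ↦ fracWeight α (f i - f j)).IsSymm :=
  IsSymm.ext fun i j ↦ by simp only [of_apply, ← fracWeight_neg α (f i - f j), neg_sub]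

theorem sum_abs_fracWeight_sub_lt {ι : Type*} {α : ℝ} (hα0 : 0 < α) (hα2 : α < 2) {f : ι → ℤ}
    (hf : Function.Injective f) {s : Finset ι} {i : ι} (hi : i ∉ s) :
    ∑ j ∈ s, |fracWeight α (f i - f j)| < fracWeight α 0 := by
  have hinj : Function.Injective fun j ↦ f i - f j := sub_right_injective.comp hf
  have hzero : 0 ∉ s.image fun j ↦ f i - f j := by
    simpa [sub_eq_zero, hf.eq_iff] using hi
  simpa only [Finset.sum_image hinj.injOn] using sum_abs_fracWeight_lt hα0 hα2 hzero

theorem toeplitz_fracWeight_posDef_general {ι : Type*} [Finite ι] {α : ℝ} (hα0 : 0 < α)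
    (hα2 : α < 2) {f : ι → ℤ} (hf : Function.Injective f) :
    let P : Matrix ι ι ℝ := fun i j => fracWeight α (f i - f j)
    P.IsSymm ∧ P.PosDef := by
  classical
  intro P
  have := Fintype.ofFinite ι
  have hsymm : P.IsSymm := toeplitz_fracWeight_isSymm α f
  refine ⟨hsymm, posDef_of_isHermitian_of_sum_row_lt_diag
    (isHermitian_iff_isSymm.mpr hsymm) fun i ↦ ?_⟩
  simpa only [P, sub_self, Real.norm_eq_abs, RCLike.re_to_real] using
    sum_abs_fracWeight_sub_lt hα0 hα2 hf (Finset.notMem_erase i Finset.univ)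

/-- Let `α` be real with `0 < α < 2` and let `M ≥ 1` be a natural number.
Then the `M × M` Toeplitz matrix `P` with entries `P_{ij} = w_{i−j}^α` is symmetric
and positive definite. -/
theorem toeplitz_fracWeight_posDef (α : ℝ) (hα0 : 0 < α) (hα2 : α < 2)
    (M : ℕ) (hM : 1 ≤ M) :
    let P : Matrix (Fin M) (Fin M) ℝ := fun i j => fracWeight α ((i : ℤ) - (j : ℤ))
    P.IsSymm ∧ P.PosDef :=
  toeplitz_fracWeight_posDef_general hα0 hα2 (Nat.cast_injective.comp Fin.val_injective)
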